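/- Let p₁,…,p_t be a sequence of distinct points of ℤ² in which p_i and p_j are adjacent if and only if |i−j| = 1, and let w = {(p_i,0),(p_i,1) : 1 ≤ i ≤ t} ⊂ ℤ³ be the associated slab-wire. Then every slab contained in w equals q_i ∪ q_{i+1} for some 1 ≤ i < t, i.e., the union of two consecutive cube pairs; in particular w contains no horizontal slab, and any slab inside w covers each of its two cube pairs entirely. -/

import Mathlib

/-- Two cubes of `ℤ^d` are adjacent if they differ by a standard basis vector. -/
def CubeAdj {d : ℕ} (a b : Fin d → ℤ) : Prop :=
  ∃ i : Fin d, a = b + Pi.single i 1 ∨ b = a + Pi.single i 1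

/-- Two cells of `ℤ²` are adjacent if they differ by a standard basis vector. -/
def CellAdj (a b : ℤ × ℤ) : Prop :=
  a = b + (1, 0) ∨ b = a + (1, 0) ∨ a = b + (0, 1) ∨ b = a + (0, 1)

/-- A slab: a lattice copy of the `2 × 2 × 1` brick, i.e. a set of the form
`t + σ({0,1} × {0,1} × {0})` where `σ` permutes the three coordinates. -/
def IsSlab (s : Set (Fin 3 → ℤ)) : Prop :=
  ∃ (t : Fin 3 → ℤ) (σ : Equiv.Perm (Fin 3)),
    s = (fun v : Fin 3 → ℤ => t + v ∘ ⇑σ) ''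
      {v | (v 0 = 0 ∨ v 0 = 1) ∧ (v 1 = 0 ∨ v 1 = 1) ∧ v 2 = 0}

/-- The slab-wire associated to a sequence of points of `ℤ²`. -/
def slabWire {n : ℕ} (p : Fin n → ℤ × ℤ) : Set (Fin 3 → ℤ) :=
  {x | ∃ i : Fin n, x = ![(p i).1, (p i).2, 0] ∨ x = ![(p i).1, (p i).2, 1]}

/-- The `i`-th cube pair of the slab-wire. -/
def cubePair {n : ℕ} (p : Fin n → ℤ × ℤ) (i : Fin n) : Set (Fin 3 → ℤ) :=
  {![(p i).1, (p i).2, 0], ![(p i).1, (p i).2, 1]}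

/-!
The normal direction of a slab decides everything. If it is vertical, the slab sits over a `2 × 2`
square of cells, all of which lie on the path; their indices would form a `4`-cycle in which
consecutive entries differ by one, forcing two opposite cells to have the same index. Otherwise
the slab sits over two adjacent cells, and having height two it fills the whole height of the wire
over both of them.
-/

theorem forall_fin_three {P : Fin 3 → Prop} : (∀ m, P m) ↔ P 0 ∧ P 1 ∧ P 2 := by
  simp [Fin.forall_fin_succ]

theorem image_comp_equiv_Icc {ι κ α : Type*} [Preorder α] (σ : κ ≃ ι) (a b : ι → α) :
    (· ∘ σ) '' Set.Icc a b = Set.Icc (a ∘ σ) (b ∘ σ) := by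
  ext x
  constructor
  · rintro ⟨v, hv, rfl⟩
    exact ⟨fun k => hv.1 (σ k), fun k => hv.2 (σ k)⟩
  · intro hx
    refine ⟨x ∘ σ.symm, ⟨fun i => ?_, fun i => ?_⟩, ?_⟩
    · simpa using hx.1 (σ.symm i)
    · simpa using hx.2 (σ.symm i)
    · simp [Function.comp_assoc]

/-- The slab with lowest corner `t` and normal direction `k`, as a box: it has side length `2` in
every direction except `k`, where it has side length `1`. -/
def slabBox (t : Fin 3 → ℤ) (k : Fin 3) : Set (Fin 3 → ℤ) :=
  Set.Icc t (t + (1 - Pi.single k 1))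

theorem mem_slabBox_iff {t x : Fin 3 → ℤ} {k : Fin 3} :
    x ∈ slabBox t k ↔ ∀ m, x m = t m ∨ m ≠ k ∧ x m = t m + 1 := by
  simp only [slabBox, Set.mem_Icc, Pi.le_def, ← forall_and, Pi.add_apply, Pi.sub_apply,
    Pi.one_apply, Pi.single_apply]
  refine forall_congr' fun m => ?_
  split_ifs <;> omega

theorem IsSlab.exists_eq_slabBox {s : Set (Fin 3 → ℤ)} (hs : IsSlab s) :
    ∃ t k, s = slabBox t k := by
  obtain ⟨t, σ, rfl⟩ := hs
  have brick_eq_slabBox :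
      {v : Fin 3 → ℤ | (v 0 = 0 ∨ v 0 = 1) ∧ (v 1 = 0 ∨ v 1 = 1) ∧ v 2 = 0} = slabBox 0 2 := by
    ext v
    simp [mem_slabBox_iff, forall_fin_three]
  have single_comp : (1 - Pi.single 2 1 : Fin 3 → ℤ) ∘ σ = 1 - Pi.single (σ.symm 2) 1 := by
    ext m
    simp [Pi.single_apply, Equiv.eq_symm_apply]
  refine ⟨t, σ.symm 2, ?_⟩
  rw [brick_eq_slabBox, ← Set.image_image (t + ·) (· ∘ σ), slabBox, zero_add,
    image_comp_equiv_Icc, Set.image_const_add_Icc, single_comp, Pi.zero_comp, add_zero, slabBox]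

section SlabWire

variable {n : ℕ} {p : Fin n → ℤ × ℤ}

theorem mem_cubePair_iff {i : Fin n} {x : Fin 3 → ℤ} :
    x ∈ cubePair p i ↔ p i = (x 0, x 1) ∧ (x 2 = 0 ∨ x 2 = 1) := by
  have eq_vec (c : ℤ) : x = ![(p i).1, (p i).2, c] ↔ p i = (x 0, x 1) ∧ x 2 = c := by
    simp [funext_iff, forall_fin_three, Prod.ext_iff, eq_comm, and_assoc]
  simp only [cubePair, Set.mem_insert_iff, Set.mem_singleton_iff, eq_vec, and_or_left]

theorem mem_slabWire_iff {x : Fin 3 → ℤ} :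
    x ∈ slabWire p ↔ (x 0, x 1) ∈ Set.range p ∧ (x 2 = 0 ∨ x 2 = 1) := by
  change (∃ i, x ∈ cubePair p i) ↔ _
  simp only [mem_cubePair_iff, exists_and_right, Set.mem_range]

theorem exists_slabBox_eq_union_cubePair {t : Fin 3 → ℤ} {k : Fin 3} (hk : k ≠ 2)
    (hsub : slabBox t k ⊆ slabWire p) :
    ∃ i j, CellAdj (p i) (p j) ∧ slabBox t k = cubePair p i ∪ cubePair p j := by
  have hle : t ≤ t + (1 - Pi.single k 1) := fun m => by
    by_cases h : m = k <;> simp [h]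
  obtain ⟨⟨i, hi⟩, hbot⟩ := mem_slabWire_iff.1 (hsub (Set.left_mem_Icc.2 hle))
  obtain ⟨⟨j, hj⟩, htop⟩ := mem_slabWire_iff.1 (hsub (Set.right_mem_Icc.2 hle))
  replace htop : t 2 + 1 = 0 ∨ t 2 + 1 = 1 := by simpa [hk.symm] using htop
  have ht : t 2 = 0 := by omega
  obtain rfl | rfl : k = 0 ∨ k = 1 := by omega
  · replace hj : p j = (t 0, t 1 + 1) := by simpa using hj
    refine ⟨i, j, by simp [CellAdj, hi, hj], ?_⟩
    ext x
    simp only [Set.mem_union, mem_cubePair_iff, mem_slabBox_iff, forall_fin_three, hi, hj]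
    grind
  · replace hj : p j = (t 0 + 1, t 1) := by simpa using hj
    refine ⟨i, j, by simp [CellAdj, hi, hj], ?_⟩
    ext x
    simp only [Set.mem_union, mem_cubePair_iff, mem_slabBox_iff, forall_fin_three, hi, hj]
    grind

theorem square_subset_range_of_slabBox_subset_slabWire {t : Fin 3 → ℤ}
    (hsub : slabBox t 2 ⊆ slabWire p) :
    Set.Icc (t 0, t 1) (t 0 + 1, t 1 + 1) ⊆ Set.range p := by
  rintro ⟨a, b⟩ ⟨⟨ha, hb⟩, ha', hb'⟩
  have hmem : ![a, b, t 2] ∈ slabBox t 2 := by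
    simp_all [slabBox, Pi.le_def, forall_fin_three]
  exact (mem_slabWire_iff.1 (hsub hmem)).1

theorem not_square_subset_range
    (hadj : ∀ i j : Fin n, CellAdj (p i) (p j) → (i : ℕ) + 1 = j ∨ (j : ℕ) + 1 = i) (a b : ℤ) :
    ¬ Set.Icc (a, b) (a + 1, b + 1) ⊆ Set.range p := by
  intro hsub
  obtain ⟨i, hi⟩ := @hsub (a, b) (by simp)
  obtain ⟨j, hj⟩ := @hsub (a + 1, b) (by simp)
  obtain ⟨k, hk⟩ := @hsub (a + 1, b + 1) (by simp)
  obtain ⟨l, hl⟩ := @hsub (a, b + 1) (by simp)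
  have hij := hadj i j (by simp [CellAdj, hi, hj])
  have hjk := hadj j k (by simp [CellAdj, hj, hk])
  have hkl := hadj k l (by simp [CellAdj, hk, hl])
  have hli := hadj l i (by simp [CellAdj, hl, hi])
  have opposite_eq : i = k ∨ j = l := by omega
  obtain rfl | rfl := opposite_eq
  · simp [hi] at hk
  · simp [hj] at hl

theorem slab_in_slabWire_general
    (hadj : ∀ i j : Fin n, CellAdj (p i) (p j) → (i : ℕ) + 1 = j ∨ (j : ℕ) + 1 = i)
    {s : Set (Fin 3 → ℤ)} (hs : IsSlab s) (hsub : s ⊆ slabWire p) :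
    ∃ (i : Fin n) (h : (i : ℕ) + 1 < n), s = cubePair p i ∪ cubePair p ⟨(i : ℕ) + 1, h⟩ := by
  obtain ⟨t, k, rfl⟩ := hs.exists_eq_slabBox
  have hk : k ≠ 2 := by
    rintro rfl
    exact not_square_subset_range hadj _ _ (square_subset_range_of_slabBox_subset_slabWire hsub)
  obtain ⟨⟨i, hi⟩, ⟨j, hj⟩, hij, heq⟩ := exists_slabBox_eq_union_cubePair hk hsub
  obtain rfl | rfl := hadj _ _ hij
  · exact ⟨⟨i, hi⟩, hj, heq⟩
  · exact ⟨⟨j, hj⟩, hi, heq.trans (Set.union_comm _ _)⟩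

end SlabWire

/-- Every slab contained in a slab-wire is the union of two consecutive cube pairs;
in particular a slab-wire contains no horizontal slab, and any slab inside it covers
each of its two cube pairs entirely. -/
theorem slab_in_slabWire
    (n : ℕ) (p : Fin n → ℤ × ℤ) (hinj : Function.Injective p)
    (hadj : ∀ i j : Fin n, CellAdj (p i) (p j) ↔ ((i : ℕ) + 1 = (j : ℕ) ∨ (j : ℕ) + 1 = (i : ℕ))) :
    ∀ s : Set (Fin 3 → ℤ), IsSlab s → s ⊆ slabWire p →
      ∃ (i : Fin n) (h : (i : ℕ) + 1 < n), s = cubePair p i ∪ cubePair p ⟨(i : ℕ) + 1, h⟩ :=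
  fun _ hs hsub => slab_in_slabWire_general (fun i j => (hadj i j).1) hs hsub
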